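/- Let V = W_{χ(m₁)}(m₁) ⊕ … ⊕ W_{χ(m_s)}(m_s) (m₁ ≥ … ≥ m_s) be a form module over an algebraically closed field of characteristic 2 corresponding to a nilpotent ξ ∈ sp(2n)*, and Z(V) = {g ∈ GL(V) : β(gv,gw) = β(v,w), α_ξ(gv) = α_ξ(v) ∀v,w} the centralizer of ξ in Sp(2n). Then dim Z(V) = Σ_{i=1}^{s} ((4i−1)m_i − 2χ(m_i)). -/

import Mathlib

open Matrix

variable {k : Type} [Field k] {s : ℕ}

/-- Basis index set of `V = W_{l₁}(m₁) ⊕ ⋯ ⊕ W_{l_s}(m_s)`: the vectors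
`tᵃvᵢ` (`inl a`) and `tᵃwᵢ` (`inr a`), `a < mᵢ`. -/
def WIdx (m : Fin s → ℕ) : Type := Σ i : Fin s, (Fin (m i) ⊕ Fin (m i))

instance (m : Fin s → ℕ) : Fintype (WIdx m) := by unfold WIdx; infer_instance
instance (m : Fin s → ℕ) : DecidableEq (WIdx m) := by unfold WIdx; infer_instance

/-- The symplectic form `β` on `V`: `β(tᵃvᵢ, tᵇwᵢ) = δ_{a+b,mᵢ-1}`. -/
def symplMat (k : Type) [Field k] (m : Fin s → ℕ) : Matrix (WIdx m) (WIdx m) k :=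
  Matrix.of fun x y =>
    match x, y with
    | ⟨i, Sum.inl a⟩, ⟨j, Sum.inr b⟩ => if i = j ∧ (a : ℕ) + (b : ℕ) + 1 = m i then 1 else 0
    | ⟨i, Sum.inr a⟩, ⟨j, Sum.inl b⟩ => if i = j ∧ (a : ℕ) + (b : ℕ) + 1 = m i then 1 else 0
    | _, _ => 0

/-- A matrix `M` with `α_ξ(v) = vᵀMv`: diagonal entries `α_ξ(tᵃvᵢ) = δ_{a,lᵢ-1}`,
`α_ξ(tᵃwᵢ) = 0`, and above-diagonal entries the polarization
`β_ξ(tᵃvᵢ, tᵇwᵢ) = δ_{a+b,mᵢ-2}`. -/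
def alphaMat (k : Type) [Field k] (m l : Fin s → ℕ) : Matrix (WIdx m) (WIdx m) k :=
  Matrix.of fun x y =>
    match x, y with
    | ⟨i, Sum.inl a⟩, ⟨j, Sum.inl b⟩ =>
        if i = j ∧ (a : ℕ) = (b : ℕ) ∧ (a : ℕ) + 1 = l i then 1 else 0
    | ⟨i, Sum.inl a⟩, ⟨j, Sum.inr b⟩ => if i = j ∧ (a : ℕ) + (b : ℕ) + 2 = m i then 1 else 0
    | _, _ => 0

/-- The generic matrix, with entries the coordinate functions on the space of
`|V| × |V|` matrices. -/
noncomputable def genMat (k : Type) [Field k] (m : Fin s → ℕ) :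
    Matrix (WIdx m) (WIdx m) (MvPolynomial (WIdx m × WIdx m) k) :=
  Matrix.of fun x y => MvPolynomial.X (x, y)

/-- The ideal of equations of the centralizer
`Z(V) = {g : β(gv,gw) = β(v,w), α_ξ(gv) = α_ξ(v)}`: with `N = GᵀMG + M`, the entries of
`GᵀSG − S`, of `N − Nᵀ`, and the diagonal entries of `N` (char 2: `α_ξ ∘ G = α_ξ` iff
`N` is alternating). -/
noncomputable def betaRel (k : Type) [Field k] (m : Fin s → ℕ) :
    Matrix (WIdx m) (WIdx m) (MvPolynomial (WIdx m × WIdx m) k) :=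
  (genMat k m)ᵀ * (symplMat k m).map MvPolynomial.C * genMat k m -
    (symplMat k m).map MvPolynomial.C

/-- `N = GᵀMG + M`; in characteristic 2, `α_ξ ∘ G = α_ξ` iff `N` is alternating, i.e.
`N - Nᵀ = 0` and `diag N = 0`. -/
noncomputable def alphaRel (k : Type) [Field k] (m l : Fin s → ℕ) :
    Matrix (WIdx m) (WIdx m) (MvPolynomial (WIdx m × WIdx m) k) :=
  (genMat k m)ᵀ * (alphaMat k m l).map MvPolynomial.C * genMat k m +
    (alphaMat k m l).map MvPolynomial.C

/-- The ideal of equations of the centralizer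
`Z(V) = {g : β(gv,gw) = β(v,w), α_ξ(gv) = α_ξ(v)}` of `ξ` in `Sp(2n)`. -/
noncomputable def centralizerIdeal (k : Type) [Field k] (m l : Fin s → ℕ) :
    Ideal (MvPolynomial (WIdx m × WIdx m) k) :=
  Ideal.span
    ({p | ∃ x y : WIdx m, p = betaRel k m x y} ∪
     {p | ∃ x y : WIdx m, p = (alphaRel k m l - (alphaRel k m l)ᵀ) x y} ∪
     {p | ∃ x : WIdx m, p = alphaRel k m l x x})

/-!
The dimension of `Z(V)` is bounded from both sides by counting.

From below, a subscheme of affine space `Aᴺ` cut out by `e` equations has dimension at least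
`N - e`. If `G` commutes with `t`, then `Gᵀ * S * G` intertwines `t` and `tᵀ` whenever `S` does, so
its blocks are Hankel matrices. Hence `β(Gx, Gy) = β(x, y)` need only be tested in the first column
of the off-diagonal blocks on one side of the diagonal; and `α(Gx) = α(x)` need only be tested on
the basis vectors `tᵃvᵢ`, `tᵃwᵢ` with `a < lᵢ`, as both sides vanish on the others.

From above, a scheme has dimension at most `e` if each of its points is isolated in the locus of
`e` further equations through it. Translating the point to `1`, these equations fix coordinates of
`H ∈ Z(V)` to be those of `1`. They make `H` block triangular; its inverse, being the adjoint of `H`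
for `β`, is too, so `H` is block diagonal. The coefficient `f(r)` of `t^(r + 2lᵢ - mᵢ)` in the block
from `wᵢ` to `vᵢ` then satisfies `f(r)² = f(2r)` because `α` is preserved. As `f` has finite
support, `f(r) = 0` for `r ≠ 0` and `f(0) ∈ {0, 1}`, so only finitely many `H` remain.

The two numbers `e` add up to `N`.
-/

section KrullDimension

open MvPolynomial

universe u v

/-- The automorphism `f(X) ↦ f(X + z)` of the polynomial ring, induced by a translation of
affine space. -/
noncomputable def mvPolynomialTranslate {R σ : Type*} [CommRing R] (z : σ → R) :
    MvPolynomial σ R ≃ₐ[R] MvPolynomial σ R :=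
  AlgEquiv.ofAlgHom (aeval fun i => X i + C (z i)) (aeval fun i => X i - C (z i))
    (by ext; simp) (by ext; simp)

theorem aeval_mvPolynomialTranslate {R σ : Type*} [CommRing R] (x z : σ → R)
    (p : MvPolynomial σ R) : aeval x (mvPolynomialTranslate z p) = aeval (x + z) p := by
  have h : (aeval x).comp (mvPolynomialTranslate z : _ →ₐ[R] _) = aeval (x + z) := by
    ext; simp [mvPolynomialTranslate]
  exact DFunLike.congr_fun h p

theorem comap_mvPolynomialTranslate_vanishingIdeal {K σ : Type*} [Field K] (x z : σ → K) :
    (vanishingIdeal K {x}).comap (mvPolynomialTranslate z).toRingEquiv =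
      vanishingIdeal K {x + z} := by
  ext p
  rw [Ideal.mem_comap, mem_vanishingIdeal_singleton_iff, mem_vanishingIdeal_singleton_iff,
    ← aeval_mvPolynomialTranslate]
  rfl

/-- Translations permute the maximal ideals transitively, so they all have the maximal height. -/
theorem height_of_isMaximal_mvPolynomial {K σ : Type*} [Field K] [IsAlgClosed K] [Finite σ]
    (M : Ideal (MvPolynomial σ K)) [hM : M.IsMaximal] : M.height = Nat.card σ := by
  have hdim : ringKrullDim (MvPolynomial σ K) = (Nat.card σ : ℕ∞) := by
    rw [MvPolynomial.ringKrullDim_of_isNoetherianRing, ringKrullDim_eq_zero_of_field, zero_add]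
    rfl
  have : FiniteRingKrullDim (MvPolynomial σ K) := by
    rw [finiteRingKrullDim_iff_ne_bot_and_top, hdim]
    exact ⟨WithBot.coe_ne_bot, fun h => ENat.natCast_ne_top _ (WithBot.coe_injective h)⟩
  obtain ⟨M₀, hM₀, hheight⟩ := Ideal.exists_isMaximal_height (R := MvPolynomial σ K)
  obtain ⟨x, rfl⟩ := isMaximal_iff_eq_vanishingIdeal_singleton.mp hM
  obtain ⟨y, rfl⟩ := isMaximal_iff_eq_vanishingIdeal_singleton.mp hM₀
  rw [← add_sub_cancel y x, ← comap_mvPolynomialTranslate_vanishingIdeal, RingEquiv.height_comap]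
  exact WithBot.coe_injective (hheight.trans hdim)

theorem card_le_ringKrullDim_quotient_span_add_encard {K σ : Type*} [Field K] [IsAlgClosed K]
    [Finite σ] (S : Set (MvPolynomial σ K)) (hS : Ideal.span S ≠ ⊤) :
    (Nat.card σ : WithBot ℕ∞) ≤ ringKrullDim (MvPolynomial σ K ⧸ Ideal.span S) + S.encard := by
  obtain ⟨M, hM, hSM⟩ := Ideal.exists_le_maximal _ hS
  have h := Ideal.height_le_ringKrullDim_quotient_add_encard S (Ideal.span_le.mp hSM)
  rwa [height_of_isMaximal_mvPolynomial M] at h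

theorem ringKrullDim_quotient_anti {R : Type*} [CommRing R] {I J : Ideal R} (h : I ≤ J) :
    ringKrullDim (R ⧸ J) ≤ ringKrullDim (R ⧸ I) :=
  ringKrullDim_le_of_surjective _ (Ideal.Quotient.factor_surjective h)

theorem ringKrullDim_le_of_forall_isMaximal {A : Type*} [CommRing A] [IsNoetherianRing A] {n : ℕ∞}
    (h : ∀ M : Ideal A, M.IsMaximal →
      ∃ S : Set A, S ⊆ M ∧ S.encard ≤ n ∧ ringKrullDim (A ⧸ Ideal.span S) ≤ 0) :
    ringKrullDim A ≤ n := by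
  rw [ringKrullDim_le_iff_isMaximal_height_le]
  intro M hM
  obtain ⟨S, hSM, hSn, hS⟩ := h M hM
  calc (M.height : WithBot ℕ∞)
      ≤ ringKrullDim (A ⧸ Ideal.span S) + S.encard :=
        Ideal.height_le_ringKrullDim_quotient_add_encard S hSM
    _ ≤ 0 + n := add_le_add hS (WithBot.coe_le_coe.mpr hSn)
    _ = n := zero_add _

theorem surjective_algebraMap_of_range_X {K σ D : Type*} [CommRing K] [CommRing D] [Algebra K D]
    {φ : MvPolynomial σ K →ₐ[K] D} (hφ : Function.Surjective φ)
    (h : ∀ c, φ (X c) ∈ (⊥ : Subalgebra K D)) : Function.Surjective (algebraMap K D) := by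
  have hle : φ.range ≤ ⊥ := by
    rw [← Algebra.map_top, ← adjoin_range_X, AlgHom.map_adjoin, Algebra.adjoin_le_iff]
    rintro _ ⟨_, ⟨c, rfl⟩, rfl⟩
    exact h c
  intro d
  obtain ⟨p, rfl⟩ := hφ d
  exact Algebra.mem_bot.mp (hle ⟨p, rfl⟩)

theorem ringKrullDim_le_zero_of_surjective_algebraMap {K A : Type*} [Field K] [CommRing A]
    [Algebra K A]
    (h : ∀ q : Ideal A, q.IsPrime → Function.Surjective (algebraMap K (A ⧸ q))) :
    ringKrullDim A ≤ 0 := by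
  rw [← Nat.cast_zero, ← Ring.krullDimLE_iff, Ring.krullDimLE_zero_iff]
  intro q hq
  have hbij : Function.Bijective (algebraMap K (A ⧸ q)) := ⟨(algebraMap K _).injective, h q hq⟩
  exact Ideal.Quotient.maximal_of_isField q
    ((RingEquiv.ofBijective _ hbij).symm.toMulEquiv.isField (Field.toIsField K))

theorem ringKrullDim_quotient_le_zero {K : Type u} {σ : Type v} [Field K]
    (J : Ideal (MvPolynomial σ K))
    (h : ∀ (D : Type max u v) [CommRing D] [IsDomain D] [Algebra K D]
      (φ : MvPolynomial σ K →ₐ[K] D), J ≤ RingHom.ker φ →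
        ∀ c, φ (X c) ∈ (⊥ : Subalgebra K D)) :
    ringKrullDim (MvPolynomial σ K ⧸ J) ≤ 0 := by
  refine ringKrullDim_le_zero_of_surjective_algebraMap (K := K) fun q hq => ?_
  let φ := (Ideal.Quotient.mkₐ K q).comp (Ideal.Quotient.mkₐ K J)
  have hφ : Function.Surjective φ :=
    (Ideal.Quotient.mkₐ_surjective K q).comp (Ideal.Quotient.mkₐ_surjective K J)
  refine surjective_algebraMap_of_range_X hφ (h _ φ fun p hp => ?_)
  rw [RingHom.mem_ker, AlgHom.comp_apply, Ideal.Quotient.mkₐ_eq_mk, Ideal.Quotient.mkₐ_eq_mk,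
    Ideal.Quotient.eq_zero_iff_mem.mpr hp, map_zero]

/-- Cutting `V(I)` at each of its points by at most `n` equations, such that the coordinates of
any point with values in a domain of the resulting subscheme are constants, bounds the
dimension. -/
theorem ringKrullDim_quotient_le_of_forall_zeroLocus {K : Type u} {σ : Type v} [Field K]
    [IsAlgClosed K] [Finite σ] (I : Ideal (MvPolynomial σ K)) {n : ℕ∞}
    (h : ∀ x ∈ zeroLocus K I, ∃ S : Set (MvPolynomial σ K), (∀ p ∈ S, aeval x p = 0) ∧
      S.encard ≤ n ∧ ∀ (D : Type max u v) [CommRing D] [IsDomain D] [Algebra K D]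
        (φ : MvPolynomial σ K →ₐ[K] D), I ≤ RingHom.ker φ → (∀ p ∈ S, φ p = 0) →
          ∀ c, φ (X c) ∈ (⊥ : Subalgebra K D)) :
    ringKrullDim (MvPolynomial σ K ⧸ I) ≤ n := by
  refine ringKrullDim_le_of_forall_isMaximal fun M hM => ?_
  have hM' := Ideal.comap_isMaximal_of_surjective (Ideal.Quotient.mk I)
    Ideal.Quotient.mk_surjective (K := M)
  obtain ⟨x, hx⟩ := isMaximal_iff_eq_vanishingIdeal_singleton.mp hM'
  have hIM : I ≤ vanishingIdeal K {x} := hx ▸ fun p hp => by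
    simp [Ideal.mem_comap, Ideal.Quotient.eq_zero_iff_mem.mpr hp]
  obtain ⟨S, hSx, hSn, hS⟩ := h x fun p hp => (mem_vanishingIdeal_singleton_iff x p).mp (hIM hp)
  refine ⟨Ideal.Quotient.mk I '' S, ?_, (Set.encard_image_le _ _).trans hSn, ?_⟩
  · rintro _ ⟨p, hp, rfl⟩
    rw [SetLike.mem_coe, ← Ideal.mem_comap, hx, mem_vanishingIdeal_singleton_iff, hSx p hp]
  · rw [← Ideal.map_span,
      ringKrullDim_eq_of_ringEquiv (DoubleQuot.quotQuotEquivQuotSup I (Ideal.span S))]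
    refine ringKrullDim_quotient_le_zero _ fun D _ _ _ φ hφ => ?_
    exact hS D φ (le_sup_left.trans hφ)
      fun p hp => le_sup_right.trans hφ (Ideal.subset_span hp)

end KrullDimension

theorem dotProduct_mulVec_self_eq_zero_of_transpose_eq_neg {n R : Type*} [Fintype n] [CommRing R]
    {N : Matrix n n R} (hN : Nᵀ = -N) (hdiag : ∀ i, N i i = 0) (v : n → R) :
    v ⬝ᵥ N *ᵥ v = 0 := by
  classical
  simp only [dotProduct, mulVec, Finset.mul_sum]
  rw [← Finset.sum_product']
  refine Finset.sum_involution (fun p _ => p.swap) (fun p _ => ?_) (fun p _ hp hswap => ?_)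
    (fun _ _ => Finset.mem_univ _) fun p _ => p.swap_swap
  · have h : N p.2 p.1 = -N p.1 p.2 := congrFun₂ hN p.1 p.2
    simp only [Prod.fst_swap, Prod.snd_swap, h]
    ring
  · have h : p.1 = p.2 := congrArg Prod.snd hswap
    exact hp (by rw [h, hdiag]; ring)

theorem forall_dotProduct_mulVec_self_eq_zero_iff {n R : Type*} [Fintype n]
    [CommRing R] {N : Matrix n n R} :
    (∀ v, v ⬝ᵥ N *ᵥ v = 0) ↔ Nᵀ = -N ∧ ∀ i, N i i = 0 := by
  classical
  refine ⟨fun h => ?_, fun h v => dotProduct_mulVec_self_eq_zero_of_transpose_eq_neg h.1 h.2 v⟩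
  have hdiag : ∀ i, N i i = 0 := fun i => by simpa using h (Pi.single i 1)
  refine ⟨?_, hdiag⟩
  ext i j
  have hpolar := h (Pi.single i 1 + Pi.single j 1)
  simp only [mulVec_add, dotProduct_add, add_dotProduct, mulVec_single_one,
    single_one_dotProduct, col_apply, hdiag, zero_add, add_zero] at hpolar
  rw [transpose_apply, neg_apply]
  exact eq_neg_of_add_eq_zero_left hpolar

theorem eq_zero_or_eq_one_of_sq_eq_two_mul {D : Type*} [MonoidWithZero D]
    [IsCancelMulZero D] {f : ℤ → D} (hf : ∀ r, f r ^ 2 = f (2 * r)) {N : ℕ}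
    (hN : ∀ r : ℤ, N ≤ |r| → f r = 0) (r : ℤ) : f r = 0 ∨ f r = 1 := by
  rcases eq_or_ne r 0 with rfl | hr
  · exact IsIdempotentElem.iff_eq_zero_or_one.mp (by rw [IsIdempotentElem, ← sq, hf, mul_zero])
  left
  have hpow : ∀ n, f r ^ 2 ^ n = f (2 ^ n * r) := by
    intro n
    induction n with
    | zero => simp
    | succ n ih => rw [pow_succ, pow_mul, ih, hf, pow_succ', mul_assoc]
  refine pow_eq_zero_iff (by positivity) |>.mp ((hpow N).trans (hN _ ?_))
  calc (N : ℤ) ≤ 2 ^ N := by exact_mod_cast N.lt_two_pow_self.le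
    _ ≤ 2 ^ N * |r| := le_mul_of_one_le_right (by positivity) (Int.one_le_abs hr)
    _ = |2 ^ N * r| := by rw [abs_mul, abs_of_pos (by positivity : (0 : ℤ) < 2 ^ N)]

theorem sum_sum_min_of_injective {ι κ : Type*} [Fintype ι] [LinearOrder κ] {e : ι → κ}
    (he : Function.Injective e) {f : ι → ℕ} (hf : ∀ i j, e i < e j → f j ≤ f i) :
    ∑ i, ∑ j, min (f i) (f j) = 2 * ∑ i, f i * Nat.card {j // e j < e i} + ∑ i, f i := by
  classical
  have hmin (i j : ι) : min (f i) (f j) = (if e j < e i then f i else 0) +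
      (if e i < e j then f j else 0) + if i = j then f i else 0 := by
    rcases lt_trichotomy (e i) (e j) with h | h | h
    · simp [h, h.not_gt, ne_of_apply_ne e h.ne, hf i j h]
    · simp [he h]
    · simp [h, h.not_gt, ne_of_apply_ne e h.ne', hf j i h]
  have hlt : ∑ i, ∑ j, (if e j < e i then f i else 0) = ∑ i, f i * Nat.card {j // e j < e i} :=
    Finset.sum_congr rfl fun i _ => by
      rw [← Finset.sum_filter, Finset.sum_const, smul_eq_mul, mul_comm, Nat.card_eq_fintype_card,
        Fintype.card_subtype]
  simp only [hmin, Finset.sum_add_distrib, Finset.sum_ite_eq, Finset.mem_univ, if_true]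
  rw [Finset.sum_comm (f := fun i j => if e i < e j then f j else 0), hlt, two_mul]

theorem mul_pred_add_tsub_add_min (a : ℕ) {b : ℕ} (hb : 0 < b) :
    a * (b - 1) + (a - b) + min a b = a * b := by
  obtain ⟨b, rfl⟩ := Nat.exists_eq_add_one.mpr hb
  rw [Nat.add_sub_cancel, mul_add_one]
  omega

theorem encard_range_le_natCard {ι α : Type*} [Finite ι] (f : ι → α) :
    (Set.range f).encard ≤ Nat.card ι := by
  rw [← Set.image_univ, ← ENat.card_eq_coe_natCard, ← Set.encard_univ]
  exact Set.encard_image_le _ _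

theorem eq_natCast_of_le_of_add_le_add {x : WithBot ℕ∞} {a b : ℕ} (hle : x ≤ a)
    (h : ((a + b : ℕ) : WithBot ℕ∞) ≤ x + b) : x = a := by
  induction x with
  | bot => simp at h
  | coe x =>
    induction x with
    | top => exact absurd (WithBot.coe_le_coe.mp hle) (by simp)
    | coe n =>
      norm_cast at hle h ⊢
      omega

namespace WIdx

variable {m : Fin s → ℕ}

/-- The cyclic summand containing a basis vector: `(i, false)` for `A·vᵢ` and `(i, true)` for
`A·wᵢ`. -/
def summand : WIdx m → Fin s × Bool
  | ⟨i, Sum.inl _⟩ => (i, false)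
  | ⟨i, Sum.inr _⟩ => (i, true)

/-- The exponent `a` of the basis vector `tᵃvᵢ` or `tᵃwᵢ`. -/
def expo : WIdx m → ℕ
  | ⟨_, Sum.inl a⟩ => a
  | ⟨_, Sum.inr a⟩ => a

/-- The basis vector `tᵃvᵢ` or `tᵃwᵢ` of the cyclic summand `p`. -/
def mk : (p : Fin s × Bool) → (a : ℕ) → a < m p.1 → WIdx m
  | (i, false), a, h => ⟨i, Sum.inl ⟨a, h⟩⟩
  | (i, true), a, h => ⟨i, Sum.inr ⟨a, h⟩⟩

@[simp]
theorem summand_mk (p : Fin s × Bool) (a : ℕ) (h : a < m p.1) : (mk p a h).summand = p := by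
  rcases p with ⟨i, _ | _⟩ <;> rfl

@[simp]
theorem expo_mk (p : Fin s × Bool) (a : ℕ) (h : a < m p.1) : (mk p a h).expo = a := by
  rcases p with ⟨i, _ | _⟩ <;> rfl

theorem expo_lt : ∀ x : WIdx m, x.expo < m x.summand.1
  | ⟨_, Sum.inl a⟩ => a.2
  | ⟨_, Sum.inr a⟩ => a.2

@[simp]
theorem mk_summand_expo : ∀ x : WIdx m, mk x.summand x.expo x.expo_lt = x
  | ⟨_, Sum.inl _⟩ => rfl
  | ⟨_, Sum.inr _⟩ => rfl

theorem exists_mk (x : WIdx m) : ∃ p a, ∃ h : a < m p.1, x = mk p a h :=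
  ⟨_, _, x.expo_lt, x.mk_summand_expo.symm⟩

protected theorem ext {x y : WIdx m} (hs : x.summand = y.summand) (he : x.expo = y.expo) :
    x = y := by
  obtain ⟨p, a, ha, rfl⟩ := x.exists_mk
  obtain ⟨q, b, hb, rfl⟩ := y.exists_mk
  simp only [summand_mk, expo_mk] at hs he
  subst hs he
  rfl

protected theorem ext_iff {x y : WIdx m} : x = y ↔ x.summand = y.summand ∧ x.expo = y.expo :=
  ⟨by rintro rfl; exact ⟨rfl, rfl⟩, fun h => WIdx.ext h.1 h.2⟩

/-- The basis vector paired with `x` by the symplectic form: `tᵃvᵢ ↔ tᵐⁱ⁻¹⁻ᵃwᵢ`. -/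
def dual (x : WIdx m) : WIdx m :=
  mk (x.summand.1, !x.summand.2) (m x.summand.1 - 1 - x.expo) (by have := x.expo_lt; grind)

@[simp]
theorem summand_dual (x : WIdx m) : x.dual.summand = (x.summand.1, !x.summand.2) :=
  summand_mk _ _ _

@[simp]
theorem expo_dual (x : WIdx m) : x.dual.expo = m x.summand.1 - 1 - x.expo :=
  expo_mk _ _ _

@[simp]
theorem dual_dual (x : WIdx m) : x.dual.dual = x := by
  have := x.expo_lt
  refine WIdx.ext (by simp) ?_
  simp only [expo_dual, summand_dual]
  omega

theorem eq_dual_comm {x y : WIdx m} : x = y.dual ↔ y = x.dual :=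
  ⟨fun h => by rw [h, dual_dual], fun h => by rw [h, dual_dual]⟩

/-- `WIdx m` as the disjoint union of the bases of the cyclic summands. -/
def equivSigma : WIdx m ≃ Σ p : Fin s × Bool, Fin (m p.1) where
  toFun x := ⟨x.summand, x.expo, x.expo_lt⟩
  invFun y := mk y.1 y.2 y.2.2
  left_inv := mk_summand_expo
  right_inv := by rintro ⟨⟨i, _ | _⟩, a⟩ <;> rfl

end WIdx

namespace FormModule

section Forms

variable (R : Type*) [CommRing R] (m l : Fin s → ℕ)

/-- The Gram matrix `symplMat` of `β` over an arbitrary ring. -/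
def symplForm : Matrix (WIdx m) (WIdx m) R :=
  of fun x y => if x = y.dual then 1 else 0

/-- The rows of `symplForm` at the basis vectors `tᵃvᵢ`: a bilinear form with polarization `β`. -/
def halfForm : Matrix (WIdx m) (WIdx m) R :=
  of fun x y => if x.summand.2 = false ∧ x = y.dual then 1 else 0

/-- The matrix of multiplication by `t`. -/
def shift : Matrix (WIdx m) (WIdx m) R :=
  of fun x y => if x.summand = y.summand ∧ x.expo = y.expo + 1 then 1 else 0

/-- The matrix `alphaMat` over an arbitrary ring: `∑ᵢ cᵢ² + β₀(v, tv)`, where `cᵢ` is the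
coefficient of `v` at `t^(lᵢ-1)vᵢ` and `β₀` is `halfForm`. -/
def quadForm : Matrix (WIdx m) (WIdx m) R :=
  diagonal (fun x => if x.summand.2 = false ∧ x.expo + 1 = l x.summand.1 then 1 else 0) +
    halfForm R m * shift R m

theorem symplForm_mul_apply (G : Matrix (WIdx m) (WIdx m) R) (x y : WIdx m) :
    (symplForm R m * G) x y = G x.dual y := by
  simp [symplForm, mul_apply, WIdx.eq_dual_comm]

theorem mul_symplForm_apply (G : Matrix (WIdx m) (WIdx m) R) (x y : WIdx m) :
    (G * symplForm R m) x y = G x y.dual := by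
  simp [symplForm, mul_apply]

theorem halfForm_mul_apply (G : Matrix (WIdx m) (WIdx m) R) (x y : WIdx m) :
    (halfForm R m * G) x y = if x.summand.2 = false then G x.dual y else 0 := by
  simp [halfForm, mul_apply, WIdx.eq_dual_comm, ite_and]

theorem mul_halfForm_apply (G : Matrix (WIdx m) (WIdx m) R) (x y : WIdx m) :
    (G * halfForm R m) x y = if y.summand.2 = true then G x y.dual else 0 := by
  have h : ∀ z : WIdx m,
      (z.summand.2 = false ∧ z = y.dual) ↔ (y.summand.2 = true ∧ z = y.dual) := by
    intro z
    refine and_congr_left ?_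
    rintro rfl
    simp
  simp only [halfForm, mul_apply, of_apply, h]
  simp [ite_and]

theorem symplForm_mul_self : symplForm R m * symplForm R m = 1 := by
  ext x y
  rw [symplForm_mul_apply]
  simp [symplForm, one_apply, WIdx.eq_dual_comm (x := x.dual), eq_comm]

theorem symplForm_transpose : (symplForm R m)ᵀ = symplForm R m := by
  ext x y
  simp [symplForm, WIdx.eq_dual_comm (x := x)]

theorem halfForm_add_transpose : halfForm R m + (halfForm R m)ᵀ = symplForm R m := by
  ext x y
  by_cases h : x = y.dual
  · subst h
    cases hy : y.summand.2 <;> simp [halfForm, symplForm, hy]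
  · simp [halfForm, symplForm, h, WIdx.eq_dual_comm (x := y)]

theorem semiconjBy_halfForm_shift : SemiconjBy (halfForm R m) (shift R m) (shift R m)ᵀ := by
  ext x y
  rw [mul_halfForm_apply, halfForm_mul_apply]
  have hx := x.expo_lt
  have hy := y.expo_lt
  simp only [transpose_apply, shift, of_apply, WIdx.summand_dual, WIdx.expo_dual, Prod.ext_iff]
  grind

theorem transpose_shift_mul_transpose_halfForm :
    (shift R m)ᵀ * (halfForm R m)ᵀ = (halfForm R m)ᵀ * shift R m := by
  simpa only [transpose_mul, transpose_transpose] using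
    congrArg transpose (semiconjBy_halfForm_shift R m).eq

theorem semiconjBy_symplForm_shift : SemiconjBy (symplForm R m) (shift R m) (shift R m)ᵀ := by
  rw [← halfForm_add_transpose]
  exact (semiconjBy_halfForm_shift R m).add_left (transpose_shift_mul_transpose_halfForm R m).symm

theorem quadForm_add_transpose [CharP R 2] :
    quadForm R m l + (quadForm R m l)ᵀ = symplForm R m * shift R m := by
  rw [quadForm, transpose_add, diagonal_transpose, transpose_mul,
    transpose_shift_mul_transpose_halfForm, add_add_add_comm, diagonal_add, ← add_mul,
    halfForm_add_transpose]
  simp [CharTwo.add_self_eq_zero]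

end Forms

section Map

variable {R R' : Type*} [CommRing R] [CommRing R'] (f : R →+* R') (m l : Fin s → ℕ)

@[simp]
theorem symplForm_map : (symplForm R m).map f = symplForm R' m := by
  ext; simp [symplForm, apply_ite f]

@[simp]
theorem halfForm_map : (halfForm R m).map f = halfForm R' m := by
  ext; simp [halfForm, apply_ite f]

@[simp]
theorem shift_map : (shift R m).map f = shift R' m := by
  ext; simp [shift, apply_ite f]

@[simp]
theorem quadForm_map : (quadForm R m l).map f = quadForm R' m l := by
  have h : ∀ P : Prop, [Decidable P] → f (if P then 1 else 0) = if P then 1 else 0 := by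
    intros; simp [apply_ite f]
  simp only [quadForm, Matrix.map_add f (map_add f), diagonal_map (map_zero f), Matrix.map_mul,
    halfForm_map, shift_map, h]

end Map

theorem symplMat_eq (m : Fin s → ℕ) : symplMat k m = symplForm k m := by
  ext x y
  obtain ⟨⟨i, σ⟩, a, ha, rfl⟩ := x.exists_mk
  obtain ⟨⟨j, τ⟩, b, hb, rfl⟩ := y.exists_mk
  dsimp only at ha hb
  have hdual : (WIdx.mk (i, σ) a ha = (WIdx.mk (j, τ) b hb).dual) ↔
      σ = (!τ) ∧ i = j ∧ a + b + 1 = m i := by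
    simp only [WIdx.ext_iff, WIdx.summand_mk, WIdx.summand_dual, WIdx.expo_mk, WIdx.expo_dual]
    grind
  have hform : symplForm k m (.mk (i, σ) a ha) (.mk (j, τ) b hb) =
      if σ = (!τ) ∧ i = j ∧ a + b + 1 = m i then 1 else 0 := if_congr hdual rfl rfl
  rw [hform]
  cases σ <;> cases τ
  · rfl
  · exact if_congr (by simp) rfl rfl
  · exact if_congr (by simp) rfl rfl
  · rfl

theorem alphaMat_eq (m l : Fin s → ℕ) : alphaMat k m l = quadForm k m l := by
  ext x y
  obtain ⟨⟨i, σ⟩, a, ha, rfl⟩ := x.exists_mk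
  obtain ⟨⟨j, τ⟩, b, hb, rfl⟩ := y.exists_mk
  dsimp only at ha hb
  have hform : quadForm k m l (.mk (i, σ) a ha) (.mk (j, τ) b hb) =
      if σ = false ∧ τ = false ∧ i = j ∧ a = b ∧ a + 1 = l i ∨
        σ = false ∧ τ = true ∧ i = j ∧ a + b + 2 = m i then 1 else 0 := by
    simp only [quadForm, Matrix.add_apply, halfForm_mul_apply, diagonal_apply, shift, of_apply,
      WIdx.ext_iff, WIdx.summand_mk, WIdx.expo_mk, WIdx.summand_dual, WIdx.expo_dual, Prod.ext_iff]
    grind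
  rw [hform]
  cases σ <;> cases τ
  · exact if_congr (by simp) rfl rfl
  · exact if_congr (by simp) rfl rfl
  · rfl
  · rfl

section Defect

variable {R : Type*} [CommRing R] {m : Fin s → ℕ} (l : Fin s → ℕ)

/-- The matrix of the bilinear form `β(Gx, Gy) - β(x, y)`. -/
def betaDefect (G : Matrix (WIdx m) (WIdx m) R) : Matrix (WIdx m) (WIdx m) R :=
  Gᵀ * symplForm R m * G - symplForm R m

/-- A matrix of the quadratic form `α(Gx) + α(x)`. -/
def alphaDefect (G : Matrix (WIdx m) (WIdx m) R) : Matrix (WIdx m) (WIdx m) R :=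
  Gᵀ * quadForm R m l * G + quadForm R m l

theorem betaDefect_map {R' : Type*} [CommRing R'] (f : R →+* R') (G : Matrix (WIdx m) (WIdx m) R) :
    (betaDefect G).map f = betaDefect (G.map f) := by
  simp only [betaDefect, Matrix.map_sub f (map_sub f), Matrix.map_mul, transpose_map,
    symplForm_map]

theorem alphaDefect_map {R' : Type*} [CommRing R'] (f : R →+* R')
    (G : Matrix (WIdx m) (WIdx m) R) :
    (alphaDefect l G).map f = alphaDefect l (G.map f) := by
  simp only [alphaDefect, Matrix.map_add f (map_add f), Matrix.map_mul, transpose_map,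
    quadForm_map]

theorem betaDefect_transpose (G : Matrix (WIdx m) (WIdx m) R) :
    (betaDefect G)ᵀ = betaDefect G := by
  simp only [betaDefect, transpose_sub, transpose_mul, transpose_transpose, symplForm_transpose,
    Matrix.mul_assoc]

theorem alphaDefect_add_transpose [CharP R 2] (G : Matrix (WIdx m) (WIdx m) R) :
    alphaDefect l G + (alphaDefect l G)ᵀ =
      Gᵀ * (symplForm R m * shift R m) * G + symplForm R m * shift R m := by
  simp only [← quadForm_add_transpose R m l, alphaDefect, transpose_add, transpose_mul,
    transpose_transpose, mul_add, add_mul, Matrix.mul_assoc]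
  abel

theorem dotProduct_alphaDefect_mulVec (G : Matrix (WIdx m) (WIdx m) R) (v : WIdx m → R) :
    v ⬝ᵥ alphaDefect l G *ᵥ v =
      (G *ᵥ v) ⬝ᵥ quadForm R m l *ᵥ (G *ᵥ v) + v ⬝ᵥ quadForm R m l *ᵥ v := by
  rw [alphaDefect, add_mulVec, dotProduct_add, ← mulVec_mulVec, ← mulVec_mulVec, dotProduct_mulVec,
    vecMul_transpose]

theorem betaRel_eq (m : Fin s → ℕ) : betaRel k m = betaDefect (genMat k m) := by
  rw [betaRel, betaDefect, symplMat_eq, symplForm_map]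

theorem alphaRel_eq (m l : Fin s → ℕ) : alphaRel k m l = alphaDefect l (genMat k m) := by
  rw [alphaRel, alphaDefect, alphaMat_eq, quadForm_map]

end Defect

section Centralizer

variable {R : Type*} [CommRing R] {m : Fin s → ℕ} {l : Fin s → ℕ}

variable (l) in
/-- `G` is an `R`-point of the centralizer `Z(V)`. -/
structure IsCentralizer (G : Matrix (WIdx m) (WIdx m) R) : Prop where
  beta : Gᵀ * symplForm R m * G = symplForm R m
  alpha : ∀ v, (G *ᵥ v) ⬝ᵥ quadForm R m l *ᵥ (G *ᵥ v) = v ⬝ᵥ quadForm R m l *ᵥ v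

theorem isCentralizer_iff [CharP R 2] {G : Matrix (WIdx m) (WIdx m) R} :
    IsCentralizer l G ↔ betaDefect G = 0 ∧
      alphaDefect l G + (alphaDefect l G)ᵀ = 0 ∧ ∀ x, alphaDefect l G x x = 0 := by
  have halpha : (∀ v, (G *ᵥ v) ⬝ᵥ quadForm R m l *ᵥ (G *ᵥ v) = v ⬝ᵥ quadForm R m l *ᵥ v) ↔
      alphaDefect l G + (alphaDefect l G)ᵀ = 0 ∧ ∀ x, alphaDefect l G x x = 0 := by
    rw [add_comm, add_eq_zero_iff_eq_neg, ← forall_dotProduct_mulVec_self_eq_zero_iff]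
    simp only [dotProduct_alphaDefect_mulVec, CharTwo.add_eq_zero]
  rw [betaDefect, sub_eq_zero, ← halpha]
  exact ⟨fun h => ⟨h.beta, h.alpha⟩, fun h => ⟨h.1, h.2⟩⟩

theorem centralizerIdeal_le_ker_iff [CharP R 2] (φ : MvPolynomial (WIdx m × WIdx m) k →+* R) :
    centralizerIdeal k m l ≤ RingHom.ker φ ↔ IsCentralizer l ((genMat k m).map φ) := by
  rw [isCentralizer_iff, ← betaDefect_map, ← alphaDefect_map, ← betaRel_eq, ← alphaRel_eq,
    centralizerIdeal, Ideal.span_le, Set.union_subset_iff, Set.union_subset_iff, and_assoc]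
  simp only [← Matrix.ext_iff, Set.subset_def, SetLike.mem_coe, RingHom.mem_ker, Set.mem_ofPred_eq,
    forall_exists_index, forall_eq_apply_imp_iff, map_apply, Matrix.zero_apply, Matrix.add_apply,
    Matrix.sub_apply, transpose_apply]
  refine and_congr ?_ (and_congr_left fun _ => ?_)
  · exact ⟨fun h x y => h _ x y rfl, by rintro h _ x y rfl; exact h x y⟩
  · simp only [← CharTwo.sub_eq_add, ← map_sub]
    exact ⟨fun h x y => h _ x y rfl, by rintro h _ x y rfl; exact h x y⟩

namespace IsCentralizer

variable {G H : Matrix (WIdx m) (WIdx m) R}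

theorem map [CharP R 2] (hG : IsCentralizer l G) {R' : Type*} [CommRing R'] [CharP R' 2]
    (f : R →+* R') : IsCentralizer l (G.map f) := by
  rw [isCentralizer_iff] at *
  rw [← betaDefect_map, ← alphaDefect_map, ← transpose_map, ← Matrix.map_add f (map_add f), hG.1,
    hG.2.1]
  simp [hG.2.2]

theorem mul (hG : IsCentralizer l G) (hH : IsCentralizer l H) : IsCentralizer l (G * H) where
  beta := by
    calc (G * H)ᵀ * symplForm R m * (G * H)
        = Hᵀ * (Gᵀ * symplForm R m * G) * H := by
          simp only [transpose_mul, Matrix.mul_assoc]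
      _ = symplForm R m := by rw [hG.beta, hH.beta]
  alpha v := by rw [← mulVec_mulVec, hG.alpha, hH.alpha]

theorem mul_symplForm_mul_transpose (hG : IsCentralizer l G) :
    G * (symplForm R m * Gᵀ * symplForm R m) = 1 := by
  rw [mul_eq_one_comm, Matrix.mul_assoc, Matrix.mul_assoc, ← Matrix.mul_assoc Gᵀ, hG.beta,
    symplForm_mul_self]

theorem inv_eq (hG : IsCentralizer l G) : G⁻¹ = symplForm R m * Gᵀ * symplForm R m :=
  inv_eq_right_inv hG.mul_symplForm_mul_transpose

theorem isUnit (hG : IsCentralizer l G) : IsUnit G :=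
  .of_mul_eq_one _ hG.mul_symplForm_mul_transpose

theorem mul_inv (hG : IsCentralizer l G) : G * G⁻¹ = 1 := by
  rw [hG.inv_eq, hG.mul_symplForm_mul_transpose]

theorem inv (hG : IsCentralizer l G) : IsCentralizer l G⁻¹ where
  beta := by
    calc (G⁻¹)ᵀ * symplForm R m * G⁻¹
        = symplForm R m * (G * (symplForm R m * symplForm R m) * G⁻¹) := by
          simp only [hG.inv_eq, transpose_mul, transpose_transpose, symplForm_transpose,
            Matrix.mul_assoc]
      _ = symplForm R m := by rw [symplForm_mul_self, mul_one, hG.mul_inv, mul_one]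
  alpha v := by rw [← hG.alpha, mulVec_mulVec, hG.mul_inv, one_mulVec]

/-- The form `β(x, ty)` is the polarization of `α`, so it is preserved, as is `β`. -/
theorem commute_shift [CharP R 2] (hG : IsCentralizer l G) : Commute (shift R m) G := by
  have hadd : Gᵀ * (symplForm R m * shift R m) * G + symplForm R m * shift R m = 0 :=
    (alphaDefect_add_transpose l G).symm.trans (isCentralizer_iff.mp hG).2.1
  have hpolar : Gᵀ * (symplForm R m * shift R m) * G = symplForm R m * shift R m := by
    ext x y
    exact CharTwo.add_eq_zero.mp (congrFun₂ hadd x y)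
  have hunit : IsUnit (Gᵀ * symplForm R m) :=
    .of_mul_eq_one (G * symplForm R m) (by rw [← Matrix.mul_assoc, hG.beta, symplForm_mul_self])
  refine hunit.mul_left_cancel ?_
  calc Gᵀ * symplForm R m * (shift R m * G)
      = Gᵀ * (symplForm R m * shift R m) * G := by simp only [Matrix.mul_assoc]
    _ = Gᵀ * symplForm R m * G * shift R m := by rw [hpolar, hG.beta]
    _ = Gᵀ * symplForm R m * (G * shift R m) := Matrix.mul_assoc _ _ _

end IsCentralizer

end Centralizer

section Quad

variable {R : Type*} [CommRing R] {m : Fin s → ℕ}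

theorem transpose_mul_quadForm_mul_apply_self_eq_sum (l : Fin s → ℕ)
    (G : Matrix (WIdx m) (WIdx m) R) (x : WIdx m) :
    (Gᵀ * quadForm R m l * G) x x = ∑ u : WIdx m with u.summand.2 = false,
      ((if u.expo + 1 = l u.summand.1 then G u x ^ 2 else 0) +
        G u x * (shift R m * G) u.dual x) := by
  rw [Matrix.mul_assoc, mul_apply, Finset.sum_filter]
  refine Finset.sum_congr rfl fun u _ => ?_
  rw [quadForm, Matrix.add_mul, Matrix.add_apply, diagonal_mul, Matrix.mul_assoc,
    halfForm_mul_apply, transpose_apply]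
  rcases u.summand.2
  · simp only [true_and, ite_mul, one_mul, zero_mul, if_true, mul_add, mul_ite, mul_zero, sq]
  · simp

theorem quadForm_apply_self (l : Fin s → ℕ) (x : WIdx m) :
    quadForm R m l x x = if x.summand.2 = false ∧ x.expo + 1 = l x.summand.1 then 1 else 0 := by
  rw [quadForm, Matrix.add_apply, halfForm_mul_apply, diagonal_apply_eq]
  simp [shift, Prod.ext_iff]

end Quad

section Entry

variable {R : Type*} [CommRing R] {m : Fin s → ℕ}

/-- The entry of `L` in row `(p, b)` and column `(q, a)`, extended by zero to all exponents, so
that multiplication by `shift` becomes a shift of the exponents. -/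
def entry (L : Matrix (WIdx m) (WIdx m) R) (p : Fin s × Bool) (b : ℕ) (q : Fin s × Bool)
    (a : ℕ) : R :=
  if h : b < m p.1 ∧ a < m q.1 then L (.mk p b h.1) (.mk q a h.2) else 0

variable (G L : Matrix (WIdx m) (WIdx m) R) {p q : Fin s × Bool} {a b : ℕ}

theorem apply_mk_mk (hb : b < m p.1) (ha : a < m q.1) :
    L (.mk p b hb) (.mk q a ha) = entry L p b q a := by
  rw [entry, dif_pos ⟨hb, ha⟩]

theorem apply_eq_entry (x y : WIdx m) : L x y = entry L x.summand x.expo y.summand y.expo := by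
  rw [← apply_mk_mk L x.expo_lt y.expo_lt, x.mk_summand_expo, y.mk_summand_expo]

theorem entry_map {R' : Type*} [CommRing R'] (f : R →+* R') (p : Fin s × Bool) (b : ℕ)
    (q : Fin s × Bool) (a : ℕ) : entry (L.map f) p b q a = f (entry L p b q a) := by
  unfold entry
  split_ifs
  · rfl
  · exact (map_zero f).symm

theorem entry_eq_zero_of_row_le (hb : m p.1 ≤ b) : entry L p b q a = 0 :=
  dif_neg fun h => (h.1.trans_le hb).false

theorem entry_eq_zero_of_col_le (ha : m q.1 ≤ a) : entry L p b q a = 0 :=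
  dif_neg fun h => (h.2.trans_le ha).false

theorem entry_transpose : entry Lᵀ p b q a = entry L q a p b := by
  simp only [entry, transpose_apply, and_comm]

theorem entry_mul_shift : entry (G * shift R m) p b q a = entry G p b q (a + 1) := by
  by_cases hb : b < m p.1
  swap
  · rw [entry_eq_zero_of_row_le _ (not_lt.mp hb), entry_eq_zero_of_row_le _ (not_lt.mp hb)]
  by_cases ha : a < m q.1
  swap
  · rw [entry_eq_zero_of_col_le _ (not_lt.mp ha), entry_eq_zero_of_col_le _ (by omega)]
  rw [← apply_mk_mk _ hb ha, mul_apply]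
  by_cases ha' : a + 1 < m q.1
  · rw [← apply_mk_mk _ hb ha', Finset.sum_eq_single (WIdx.mk q (a + 1) ha')]
    · simp [shift]
    · intro z _ hz
      have : ¬ (z.summand = q ∧ z.expo = a + 1) := fun h =>
        hz (WIdx.ext (by simp [h.1]) (by simp [h.2]))
      simp [shift, this]
    · simp
  · rw [entry_eq_zero_of_col_le _ (not_lt.mp ha')]
    refine Finset.sum_eq_zero fun z _ => ?_
    have : ¬ (z.summand = q ∧ z.expo = a + 1) := by
      rintro ⟨rfl, hz⟩
      exact ha' (hz ▸ z.expo_lt)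
    simp [shift, this]

theorem entry_shift_transpose_mul :
    entry ((shift R m)ᵀ * L) p b q a = entry L p (b + 1) q a := by
  rw [← entry_transpose, transpose_mul, transpose_transpose, entry_mul_shift, entry_transpose]

theorem entry_shift_mul_zero : entry (shift R m * G) p 0 q a = 0 := by
  unfold entry
  split_ifs with h
  · rw [mul_apply]
    exact Finset.sum_eq_zero fun z _ => by simp [shift]
  · rfl

theorem entry_shift_mul_succ (hb : b + 1 < m p.1) :
    entry (shift R m * G) p (b + 1) q a = entry G p b q a := by
  by_cases ha : a < m q.1
  swap
  · rw [entry_eq_zero_of_col_le _ (not_lt.mp ha), entry_eq_zero_of_col_le _ (not_lt.mp ha)]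
  have hb' : b < m p.1 := b.lt_succ_self.trans hb
  rw [← apply_mk_mk _ hb ha, ← apply_mk_mk _ hb' ha, mul_apply,
    Finset.sum_eq_single (WIdx.mk p b hb')]
  · simp [shift]
  · intro z _ hz
    have : ¬ (p = z.summand ∧ b = z.expo) := fun h =>
      hz (WIdx.ext (by simp [h.1]) (by simp [h.2]))
    simp [shift, this]
  · simp

end Entry

section Hankel

variable {R : Type*} [CommRing R] {m : Fin s → ℕ} {L : Matrix (WIdx m) (WIdx m) R}
  (hL : SemiconjBy L (shift R m) (shift R m)ᵀ)
include hL

theorem entry_eq_entry_zero_of_semiconjBy (p q : Fin s × Bool) (b a : ℕ) :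
    entry L p b q a = entry L p (b + a) q 0 := by
  induction a generalizing b with
  | zero => rfl
  | succ a ih =>
    rw [← entry_mul_shift, hL.eq, entry_shift_transpose_mul, ih, add_right_comm, add_assoc]

theorem entry_comm_of_semiconjBy (p : Fin s × Bool) (b a : ℕ) :
    entry L p b p a = entry L p a p b := by
  rw [entry_eq_entry_zero_of_semiconjBy hL, entry_eq_entry_zero_of_semiconjBy hL p p a, add_comm]

theorem semiconjBy_conj_sub {G : Matrix (WIdx m) (WIdx m) R} (hG : Commute (shift R m) G) :
    SemiconjBy (Gᵀ * L * G - L) (shift R m) (shift R m)ᵀ := by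
  have hGt : SemiconjBy Gᵀ (shift R m)ᵀ (shift R m)ᵀ := by
    rw [SemiconjBy, ← transpose_mul, hG.eq, transpose_mul]
  exact ((hGt.mul_left hL).mul_left hG.symm).sub_left hL

end Hankel

section Toeplitz

variable {R : Type*} [CommRing R] {m : Fin s → ℕ} {G : Matrix (WIdx m) (WIdx m) R}

section

variable (hG : Commute (shift R m) G)
include hG

theorem entry_add_add (p q : Fin s × Bool) {b n : ℕ} (a : ℕ) (h : b + n < m p.1) :
    entry G p (b + n) q (a + n) = entry G p b q a := by
  induction n with
  | zero => rfl
  | succ n ih =>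
    have hlt : b + n + 1 < m p.1 := h
    rw [← add_assoc, ← add_assoc, ← entry_mul_shift, ← hG.eq, entry_shift_mul_succ _ hlt,
      ih (by omega)]

theorem entry_eq_zero_of_lt (p q : Fin s × Bool) {b a : ℕ} (h : b < a) : entry G p b q a = 0 := by
  by_cases hb : b < m p.1
  · obtain ⟨c, rfl⟩ := Nat.exists_eq_add_of_lt h
    rw [show b + c + 1 = c + 1 + b by ring]
    nth_rw 1 [← zero_add b]
    rw [entry_add_add hG p q _ (by omega), ← entry_mul_shift, ← hG.eq, entry_shift_mul_zero]
  · exact entry_eq_zero_of_row_le _ (not_lt.mp hb)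

theorem entry_eq_entry_sub_zero {p : Fin s × Bool} (q : Fin s × Bool) {b a : ℕ} (hb : b < m p.1)
    (h : a ≤ b) : entry G p b q a = entry G p (b - a) q 0 := by
  obtain ⟨c, rfl⟩ := Nat.exists_eq_add_of_le' h
  rw [Nat.add_sub_cancel, ← entry_add_add hG p q 0 hb, zero_add]

/-- `tᵐ` kills the image of a vector killed by `tᵐ`. -/
theorem entry_eq_zero_of_lt_add_sub (p q : Fin s × Bool) {b a : ℕ} (h : b < a + (m p.1 - m q.1)) :
    entry G p b q a = 0 := by
  rcases lt_or_ge b a with hba | hab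
  · exact entry_eq_zero_of_lt hG p q hba
  by_cases ha : a < m q.1
  · rw [← entry_add_add hG p q (n := m q.1 - a) a (by omega)]
    exact entry_eq_zero_of_col_le _ (by omega)
  · exact entry_eq_zero_of_col_le _ (not_lt.mp ha)

end

section

variable (hcol : ∀ p b q a, b < m p.1 → a + 1 < m q.1 →
    entry (shift R m * G) p b q a = entry G p b q (a + 1))
  (hsupp : ∀ p q c, c < m p.1 - m q.1 → entry G p c q 0 = 0)
include hcol hsupp

theorem entry_eq_zero_of_add_lt_add (p q : Fin s × Bool) {b a : ℕ} (h : b + m q.1 < m p.1 + a) :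
    entry G p b q a = 0 := by
  by_cases ha : a < m q.1
  swap
  · exact entry_eq_zero_of_col_le _ (not_lt.mp ha)
  by_cases hb : b < m p.1
  swap
  · exact entry_eq_zero_of_row_le _ (not_lt.mp hb)
  induction a generalizing b with
  | zero => exact hsupp p q b (by omega)
  | succ a ih =>
    rw [← hcol p b q a hb ha]
    cases b with
    | zero => exact entry_shift_mul_zero _
    | succ b =>
      rw [entry_shift_mul_succ _ hb]
      exact ih (by omega) (by omega) (by omega)

theorem commute_shift_of_entry : Commute (shift R m) G := by
  ext x y
  obtain ⟨p, b, hb, rfl⟩ := x.exists_mk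
  obtain ⟨q, a, ha, rfl⟩ := y.exists_mk
  rw [apply_mk_mk (shift R m * G), apply_mk_mk (G * shift R m), entry_mul_shift]
  by_cases ha' : a + 1 < m q.1
  · exact hcol p b q a hb ha'
  rw [entry_eq_zero_of_col_le _ (not_lt.mp ha')]
  cases b with
  | zero => exact entry_shift_mul_zero _
  | succ b =>
    rw [entry_shift_mul_succ _ hb]
    exact entry_eq_zero_of_add_lt_add hcol hsupp p q (by omega)

end

end Toeplitz

section LowerBound

variable {R : Type*} [CommRing R] {m : Fin s → ℕ} {l : Fin s → ℕ}
  {G : Matrix (WIdx m) (WIdx m) R}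

section

variable (hG : Commute (shift R m) G)
include hG

theorem betaDefect_apply_eq_zero_of_summand_eq [CharP R 2] {x y : WIdx m}
    (h : x.summand = y.summand) : betaDefect G x y = 0 := by
  set K := Gᵀ * halfForm R m * G - halfForm R m with hK
  have hKt : betaDefect G = K + Kᵀ := by
    rw [betaDefect, ← halfForm_add_transpose, hK]
    simp only [transpose_sub, transpose_mul, transpose_transpose, Matrix.mul_add, Matrix.add_mul,
      Matrix.mul_assoc]
    abel
  have hKsymm : K x y = K y x := by
    rw [apply_eq_entry K x y, apply_eq_entry K y x, h]
    exact entry_comm_of_semiconjBy (semiconjBy_conj_sub (semiconjBy_halfForm_shift R m) hG) _ _ _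
  rw [hKt, Matrix.add_apply, transpose_apply, hKsymm, CharTwo.add_self_eq_zero]

theorem betaDefect_eq_zero [CharP R 2]
    (hlower : ∀ p b q, toLex q < toLex p → b < m p.1 → entry (betaDefect G) p b q 0 = 0) :
    betaDefect G = 0 := by
  have hconj := semiconjBy_conj_sub (semiconjBy_symplForm_shift R m) hG
  have hlt : ∀ x y : WIdx m, toLex y.summand < toLex x.summand → betaDefect G x y = 0 := by
    intro x y hyx
    rw [apply_eq_entry (betaDefect G), betaDefect, entry_eq_entry_zero_of_semiconjBy hconj]
    by_cases hb : x.expo + y.expo < m x.summand.1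
    · exact hlower _ _ _ hyx hb
    · exact entry_eq_zero_of_row_le _ (not_lt.mp hb)
  ext x y
  rcases lt_trichotomy (toLex x.summand) (toLex y.summand) with hxy | hxy | hyx
  · rw [← betaDefect_transpose]
    exact hlt y x hxy
  · exact betaDefect_apply_eq_zero_of_summand_eq hG (toLex.injective hxy)
  · exact hlt x y hyx

theorem transpose_mul_quadForm_mul_apply_self_eq_zero (hl : ∀ i j, l j ≤ l i + (m j - m i))
    (hml : ∀ i, m i ≤ 2 * l i + 1) {x : WIdx m} (hx : l x.summand.1 ≤ x.expo) :
    (Gᵀ * quadForm R m l * G) x x = 0 := by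
  have hzero : ∀ u : WIdx m, ∀ a, u.expo < a + (m u.summand.1 - m x.summand.1) →
      entry G u.summand u.expo x.summand a = 0 :=
    fun u a h => entry_eq_zero_of_lt_add_sub hG _ _ h
  rw [transpose_mul_quadForm_mul_apply_self_eq_sum]
  refine Finset.sum_eq_zero fun u _ => ?_
  have hlu := hl x.summand.1 u.summand.1
  have hmlu := hml u.summand.1
  have hu := u.expo_lt
  have hdiag : u.expo + 1 = l u.summand.1 → G u x = 0 := fun he => by
    rw [apply_eq_entry G]
    exact hzero u _ (by omega)
  have hpair : G u x * (shift R m * G) u.dual x = 0 := by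
    rw [hG.eq, apply_eq_entry G, apply_eq_entry (G * _), entry_mul_shift]
    by_cases h : u.expo < x.expo + (m u.summand.1 - m x.summand.1)
    · rw [hzero u _ h, zero_mul]
    · rw [hzero u.dual _ (by simp only [WIdx.expo_dual, WIdx.summand_dual]; omega), mul_zero]
  rw [hpair, add_zero]
  split_ifs with he
  · rw [hdiag he, sq, zero_mul]
  · rfl

theorem alphaDefect_apply_self_eq_zero (hl : ∀ i j, l j ≤ l i + (m j - m i))
    (hml : ∀ i, m i ≤ 2 * l i + 1) {x : WIdx m} (hx : l x.summand.1 ≤ x.expo) :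
    alphaDefect l G x x = 0 := by
  have hone :=
    transpose_mul_quadForm_mul_apply_self_eq_zero (R := R) (G := 1) (.one_right _) hl hml hx
  rw [transpose_one, one_mul, mul_one] at hone
  rw [alphaDefect, Matrix.add_apply, transpose_mul_quadForm_mul_apply_self_eq_zero hG hl hml hx,
    hone, add_zero]

end

variable (m l) in
/-- Index set of the equations `centralizerEquation`. -/
abbrev EquationIdx : Type :=
  (Σ p : Fin s × Bool, Fin (m p.1) × {q : Fin s × Bool // toLex q < toLex p}) ⊕
    (Σ p : Fin s × Bool, Fin (l p.1)) ⊕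
    ((Σ p : Fin s × Bool, Fin (m p.1)) × Σ q : Fin s × Bool, Fin (m q.1 - 1)) ⊕
    Σ p : (Fin s × Bool) × (Fin s × Bool), Fin (m p.1.1 - m p.2.1)

variable (l) in
/-- A set of equations for the centralizer with as many elements as its codimension. The first
two families express that `G` preserves `β` and `α`, the last two that `G` commutes with `t`. -/
def centralizerEquation (G : Matrix (WIdx m) (WIdx m) R) : EquationIdx m l → R
  | .inl ⟨p, b, q⟩ => entry (betaDefect G) p b q 0
  | .inr (.inl ⟨p, a⟩) => entry (alphaDefect l G) p a p a
  | .inr (.inr (.inl (⟨p, b⟩, ⟨q, a⟩))) =>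
      entry (shift R m * G) p b q a - entry G p b q (a + 1)
  | .inr (.inr (.inr ⟨(p, q), c⟩)) => entry G p c q 0

theorem centralizerEquation_map {R' : Type*} [CommRing R'] (f : R →+* R')
    (G : Matrix (WIdx m) (WIdx m) R) (e : EquationIdx m l) :
    centralizerEquation l (G.map f) e = f (centralizerEquation l G e) := by
  rcases e with _ | _ | ⟨_, _⟩ | _ <;>
    simp only [centralizerEquation, ← betaDefect_map, ← alphaDefect_map, ← shift_map f,
      ← Matrix.map_mul, entry_map, map_sub]

theorem IsCentralizer.centralizerEquation_eq_zero [CharP R 2] (hG : IsCentralizer l G)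
    (e : EquationIdx m l) : centralizerEquation l G e = 0 := by
  obtain ⟨hbeta, -, hdiag⟩ := isCentralizer_iff.mp hG
  rcases e with ⟨p, b, q⟩ | ⟨p, a⟩ | ⟨⟨p, b⟩, ⟨q, a⟩⟩ | ⟨⟨p, q⟩, c⟩ <;>
    simp only [centralizerEquation]
  · simp [hbeta, entry]
  · simp [entry, hdiag]
  · rw [hG.commute_shift.eq, entry_mul_shift, sub_self]
  · exact entry_eq_zero_of_lt_add_sub hG.commute_shift p q (by omega)

theorem isCentralizer_of_centralizerEquation_eq_zero [CharP R 2]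
    (hl : ∀ i j, l j ≤ l i + (m j - m i)) (hml : ∀ i, m i ≤ 2 * l i + 1)
    (h : ∀ e, centralizerEquation l G e = 0) : IsCentralizer l G := by
  have hG : Commute (shift R m) G := by
    refine commute_shift_of_entry (fun p b q a hb ha => ?_) fun p q c hc => ?_
    · exact sub_eq_zero.mp (h (.inr (.inr (.inl (⟨p, b, hb⟩, ⟨q, a, by omega⟩)))))
    · exact h (.inr (.inr (.inr ⟨(p, q), c, hc⟩)))
  have hbeta : betaDefect G = 0 :=
    betaDefect_eq_zero hG fun p b q hq hb => h (.inl ⟨p, ⟨b, hb⟩, q, hq⟩)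
  refine isCentralizer_iff.mpr ⟨hbeta, ?_, fun x => ?_⟩
  · have hconj : Gᵀ * (symplForm R m * shift R m) * G = symplForm R m * shift R m := by
      calc Gᵀ * (symplForm R m * shift R m) * G
          = Gᵀ * symplForm R m * (shift R m * G) := by simp only [Matrix.mul_assoc]
        _ = Gᵀ * symplForm R m * G * shift R m := by rw [hG.eq]; simp only [Matrix.mul_assoc]
        _ = symplForm R m * shift R m := by rw [sub_eq_zero.mp hbeta]
    rw [alphaDefect_add_transpose, hconj]
    ext x y
    exact CharTwo.add_self_eq_zero _
  · by_cases hx : x.expo < l x.summand.1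
    · rw [apply_eq_entry (alphaDefect l G)]
      exact h (.inr (.inl ⟨x.summand, x.expo, hx⟩))
    · exact alphaDefect_apply_self_eq_zero hG hl hml (not_lt.mp hx)

open MvPolynomial in
theorem card_le_ringKrullDim_centralizer_add [CharP k 2] [IsAlgClosed k]
    (hl : ∀ i j, l j ≤ l i + (m j - m i)) (hml : ∀ i, m i ≤ 2 * l i + 1) :
    (Nat.card (WIdx m × WIdx m) : WithBot ℕ∞) ≤
      ringKrullDim (MvPolynomial (WIdx m × WIdx m) k ⧸ centralizerIdeal k m l) +
        Nat.card (EquationIdx m l) := by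
  set S := Set.range (centralizerEquation l (genMat k m))
  have hone : IsCentralizer l (1 : Matrix (WIdx m) (WIdx m) k) := ⟨by simp, by simp⟩
  have hker : Ideal.span S ≤ RingHom.ker (aeval (R := k) fun c => (1 : Matrix _ _ k) c.1 c.2) := by
    rw [Ideal.span_le]
    rintro _ ⟨e, rfl⟩
    rw [SetLike.mem_coe, RingHom.mem_ker, ← RingHom.coe_coe, ← centralizerEquation_map]
    convert hone.centralizerEquation_eq_zero e
    ext x y
    simp [genMat]
  have hne : Ideal.span S ≠ ⊤ := fun h => RingHom.ker_ne_top _ (top_le_iff.mp (h ▸ hker))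
  have : Nontrivial (MvPolynomial (WIdx m × WIdx m) k ⧸ Ideal.span S) :=
    Ideal.Quotient.nontrivial_iff.mpr hne
  have : CharP (MvPolynomial (WIdx m × WIdx m) k ⧸ Ideal.span S) 2 :=
    charP_of_injective_algebraMap (algebraMap k _).injective 2
  have hle : centralizerIdeal k m l ≤ Ideal.span S := by
    rw [← Ideal.mk_ker (I := Ideal.span S), centralizerIdeal_le_ker_iff]
    refine isCentralizer_of_centralizerEquation_eq_zero hl hml fun e => ?_
    rw [centralizerEquation_map]
    exact Ideal.Quotient.eq_zero_iff_mem.mpr (Ideal.subset_span ⟨e, rfl⟩)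
  have hcard : S.encard ≤ Nat.card (EquationIdx m l) := encard_range_le_natCard _
  calc (Nat.card (WIdx m × WIdx m) : WithBot ℕ∞)
      ≤ ringKrullDim (MvPolynomial (WIdx m × WIdx m) k ⧸ Ideal.span S) + S.encard :=
        card_le_ringKrullDim_quotient_span_add_encard S hne
    _ ≤ _ := add_le_add (ringKrullDim_quotient_anti hle) (by exact_mod_cast hcard)

end LowerBound

section Coeff

variable {R : Type*} [CommRing R] {m : Fin s → ℕ} {G : Matrix (WIdx m) (WIdx m) R}

/-- The coefficient of `tⁿ` in the block `(p, q)` of a matrix commuting with `t`, which is a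
polynomial in `t`; it is zero for `n < 0`. -/
def coeff (G : Matrix (WIdx m) (WIdx m) R) (p q : Fin s × Bool) (n : ℤ) : R :=
  if 0 ≤ n then entry G p n.toNat q 0 else 0

theorem coeff_eq_zero_of_neg (G : Matrix (WIdx m) (WIdx m) R) (p q : Fin s × Bool) {n : ℤ}
    (h : n < 0) : coeff G p q n = 0 :=
  if_neg (not_le.mpr h)

theorem coeff_natCast (G : Matrix (WIdx m) (WIdx m) R) (p q : Fin s × Bool) (n : ℕ) :
    coeff G p q n = entry G p n q 0 :=
  if_pos n.cast_nonneg

theorem entry_eq_coeff (hG : Commute (shift R m) G) {p : Fin s × Bool} (q : Fin s × Bool)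
    {b : ℕ} (a : ℕ) (hb : b < m p.1) : entry G p b q a = coeff G p q (b - a) := by
  rcases lt_or_ge b a with h | h
  · rw [entry_eq_zero_of_lt hG p q h, coeff_eq_zero_of_neg _ _ _ (by omega)]
  · rw [entry_eq_entry_sub_zero hG q hb h, ← Nat.cast_sub h, coeff_natCast]

end Coeff

section Slice

variable {R : Type*} [CommRing R] {m : Fin s → ℕ} {l : Fin s → ℕ}

variable (m l) in
/-- Index set of the coordinates `sliceCoord`. -/
abbrev SliceIdx : Type :=
  (Σ p : Fin s × Bool, Fin (m p.1) × {q : Fin s × Bool // toLex q < toLex p}) ⊕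
    Σ p : Fin s × Bool, Fin (m p.1 - l p.1)

variable (l) in
/-- The entries which, once fixed to be those of `1`, cut the centralizer down to a finite set. -/
def sliceCoord (G : Matrix (WIdx m) (WIdx m) R) : SliceIdx m l → R
  | .inl ⟨p, b, q⟩ => entry G p b q 0
  | .inr ⟨p, c⟩ => entry G (p.1, false) (l p.1 + c) p 0

theorem sliceCoord_map {R' : Type*} [CommRing R'] (f : R →+* R')
    (G : Matrix (WIdx m) (WIdx m) R) (e : SliceIdx m l) :
    sliceCoord l (G.map f) e = f (sliceCoord l G e) := by
  rcases e with _ | _ <;> exact entry_map _ f _ _ _ _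

theorem entry_one (p : Fin s × Bool) (b : ℕ) (q : Fin s × Bool) (a : ℕ) :
    entry (1 : Matrix (WIdx m) (WIdx m) R) p b q a =
      if p = q ∧ b = a ∧ b < m p.1 then 1 else 0 := by
  unfold entry
  simp only [one_apply, WIdx.ext_iff, WIdx.summand_mk, WIdx.expo_mk]
  grind

theorem coeff_one (p q : Fin s × Bool) (n : ℤ) :
    coeff (1 : Matrix (WIdx m) (WIdx m) R) p q n = if p = q ∧ n = 0 ∧ 0 < m p.1 then 1 else 0 := by
  simp only [coeff, entry_one]
  grind

variable {H : Matrix (WIdx m) (WIdx m) R} (hH : IsCentralizer l H)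
  (hslice : ∀ e, sliceCoord l H e = sliceCoord l 1 e)
include hslice

theorem coeff_eq_coeff_one_of_le_of_slice (i : Fin s) (τ : Bool) {n : ℤ} (hn : l i ≤ n) :
    coeff H (i, false) (i, τ) n =
      coeff (1 : Matrix (WIdx m) (WIdx m) R) (i, false) (i, τ) n := by
  obtain ⟨c, rfl⟩ := Int.eq_ofNat_of_zero_le ((l i).cast_nonneg.trans hn)
  simp only [coeff_natCast]
  by_cases hc : c < m i
  · have h := hslice (.inr ⟨(i, τ), c - l i, by dsimp only; omega⟩)
    simp only [sliceCoord] at h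
    rwa [Nat.add_sub_cancel' (by omega)] at h
  · rw [entry_eq_zero_of_row_le _ (not_lt.mp hc), entry_eq_zero_of_row_le _ (not_lt.mp hc)]

section

variable [CharP R 2]
include hH

theorem blockTriangular_of_slice : H.BlockTriangular fun x => toLex x.summand := by
  intro x y hyx
  rw [apply_eq_entry H]
  rcases lt_or_ge x.expo y.expo with h | h
  · exact entry_eq_zero_of_lt hH.commute_shift _ _ h
  rw [entry_eq_entry_sub_zero hH.commute_shift _ x.expo_lt h]
  have hlt : x.expo - y.expo < m x.summand.1 := (Nat.sub_le _ _).trans_lt x.expo_lt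
  have hne : ¬ (x.summand = y.summand) := fun h => hyx.ne (congrArg toLex h.symm)
  have h := hslice (.inl ⟨x.summand, ⟨_, hlt⟩, y.summand, hyx⟩)
  simp only [sliceCoord] at h
  rw [h, entry_one, if_neg (by tauto)]

theorem apply_eq_zero_of_fst_ne_of_slice {x y : WIdx m} (h : x.summand.1 ≠ y.summand.1) :
    H x y = 0 := by
  rcases lt_or_gt_of_ne h with hlt | hgt
  · have hinv : H⁻¹.BlockTriangular fun x => toLex x.summand := by
      have := hH.isUnit.invertible
      exact blockTriangular_inv_of_blockTriangular (blockTriangular_of_slice hH hslice)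
    have h := @hinv y.dual x.dual (by simp [Prod.Lex.toLex_lt_toLex, hlt])
    rwa [hH.inv_eq, mul_symplForm_apply, symplForm_mul_apply, x.dual_dual, y.dual_dual] at h
  · exact blockTriangular_of_slice hH hslice (by simp [Prod.Lex.toLex_lt_toLex, hgt])

theorem apply_true_false_eq_zero_of_slice {x y : WIdx m} (hx : x.summand.2 = true)
    (hy : y.summand.2 = false) : H x y = 0 := by
  by_cases h : x.summand.1 = y.summand.1
  · exact blockTriangular_of_slice hH hslice (by simp [Prod.Lex.toLex_lt_toLex, h, hx, hy])
  · exact apply_eq_zero_of_fst_ne_of_slice hH hslice h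

theorem sum_sq_of_slice (hlm : ∀ i, l i ≤ m i) (x : WIdx m) :
    ∑ u : WIdx m with u.summand.2 = false,
        (if u.expo + 1 = l u.summand.1 then H u x ^ 2 else 0) =
      coeff H (x.summand.1, false) x.summand (l x.summand.1 - 1 - x.expo) ^ 2 := by
  set i := x.summand.1
  have hoff : ∀ u : WIdx m, u.summand.1 ≠ i → H u x = 0 :=
    fun u => apply_eq_zero_of_fst_ne_of_slice hH hslice
  rcases Nat.eq_zero_or_pos (l i) with hl | hl
  · rw [coeff_eq_zero_of_neg _ _ _ (by omega)]
    refine (Finset.sum_eq_zero fun u _ => ?_).trans (by simp)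
    split_ifs with he
    · rw [hoff u fun h => by rw [h, hl] at he; omega, sq, zero_mul]
    · rfl
  have hlt : l i - 1 < m (i, false).1 := by have := hlm i; dsimp only; omega
  rw [Finset.sum_eq_single (WIdx.mk (i, false) (l i - 1) hlt)]
  · have hcast : ((l i - 1 : ℕ) : ℤ) = l i - 1 := by omega
    rw [WIdx.expo_mk, WIdx.summand_mk, if_pos (Nat.sub_add_cancel hl), apply_eq_entry H,
      WIdx.expo_mk, WIdx.summand_mk, entry_eq_coeff hH.commute_shift _ _ hlt, hcast]
  · intro u hu hne
    split_ifs with he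
    · have hui : u.summand.1 ≠ i := by
        intro h
        refine hne (WIdx.ext ?_ ?_)
        · rw [WIdx.summand_mk, ← h, ← (Finset.mem_filter.mp hu).2]
        · rw [WIdx.expo_mk, ← h, ← he, Nat.add_sub_cancel]
      rw [hoff u hui, sq, zero_mul]
    · rfl
  · simp

theorem coeff_sq_add_of_slice (hlm : ∀ i, l i ≤ m i) (x : WIdx m) :
    coeff H (x.summand.1, false) x.summand (l x.summand.1 - 1 - x.expo) ^ 2 +
        ∑ u : WIdx m with u.summand.2 = false, H u x * (shift R m * H) u.dual x =
      if x.summand.2 = false ∧ x.expo + 1 = l x.summand.1 then 1 else 0 := by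
  rw [← sum_sq_of_slice hH hslice hlm, ← Finset.sum_add_distrib,
    ← transpose_mul_quadForm_mul_apply_self_eq_sum, ← quadForm_apply_self]
  exact CharTwo.add_eq_zero.mp ((isCentralizer_iff.mp hH).2.2 x)

theorem coeff_false_false_eq_coeff_one_of_slice [NoZeroDivisors R] (hlm : ∀ i, l i ≤ m i)
    (i : Fin s) (n : ℤ) : coeff H (i, false) (i, false) n =
      coeff (1 : Matrix (WIdx m) (WIdx m) R) (i, false) (i, false) n := by
  rcases lt_or_ge n 0 with hn | hn
  · rw [coeff_eq_zero_of_neg _ _ _ hn, coeff_eq_zero_of_neg _ _ _ hn]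
  rcases le_or_gt (l i : ℤ) n with hln | hnl
  · exact coeff_eq_coeff_one_of_le_of_slice hslice i false hln
  obtain ⟨c, rfl⟩ := Int.eq_ofNat_of_zero_le hn
  have hpair : ∀ x : WIdx m, x.summand.2 = false → ∀ u : WIdx m, u.summand.2 = false →
      (shift R m * H) u.dual x = 0 := by
    intro x hx u hu
    rw [mul_apply]
    refine Finset.sum_eq_zero fun z _ => ?_
    by_cases hz : u.dual.summand = z.summand
    · rw [apply_true_false_eq_zero_of_slice hH hslice (by simp [← hz, hu]) hx, mul_zero]
    · rw [shift, of_apply, if_neg fun h => hz h.1, zero_mul]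
  have hlt : l i - 1 - c < m (i, false).1 := by have := hlm i; dsimp only; omega
  have h := coeff_sq_add_of_slice hH hslice hlm (WIdx.mk (i, false) (l i - 1 - c) hlt)
  rw [Finset.sum_eq_zero fun u hu => by
    rw [hpair _ (by simp) u (Finset.mem_filter.mp hu).2, mul_zero], add_zero] at h
  simp only [WIdx.summand_mk, WIdx.expo_mk, true_and] at h
  rw [show (l i - 1 - (l i - 1 - c : ℕ) : ℤ) = c by omega] at h
  have hiff : (l i - 1 - c + 1 = l i) ↔ ((c : ℤ) = 0 ∧ 0 < m i) := by have := hlm i; omega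
  refine CharTwo.sq_injective (h.trans ?_)
  simp only [coeff_one, true_and, hiff, ite_pow, one_pow, zero_pow two_ne_zero]

theorem apply_eq_one_apply_of_right_eq_false_of_slice [NoZeroDivisors R] (hlm : ∀ i, l i ≤ m i)
    {x y : WIdx m} (hy : y.summand.2 = false) : H x y = (1 : Matrix (WIdx m) (WIdx m) R) x y := by
  by_cases hi : x.summand.1 = y.summand.1
  swap
  · rw [apply_eq_zero_of_fst_ne_of_slice hH hslice hi, one_apply_ne (by rintro rfl; exact hi rfl)]
  cases hx : x.summand.2 with
  | true =>
    rw [apply_true_false_eq_zero_of_slice hH hslice hx hy, one_apply_ne (by rintro rfl; simp_all)]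
  | false =>
    have hxy : x.summand = y.summand := Prod.ext hi (hx.trans hy.symm)
    have hys : y.summand = (y.summand.1, false) := Prod.ext rfl hy
    rw [apply_eq_entry H, apply_eq_entry (1 : Matrix _ _ R), hxy, hys,
      entry_eq_coeff hH.commute_shift _ _ (by have := x.expo_lt; rwa [hxy] at this),
      entry_eq_coeff (.one_right _) _ _ (by have := x.expo_lt; rwa [hxy] at this),
      coeff_false_false_eq_coeff_one_of_slice hH hslice hlm]

theorem apply_eq_one_apply_of_left_eq_true_of_slice [NoZeroDivisors R] (hlm : ∀ i, l i ≤ m i)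
    {x : WIdx m} (hx : x.summand.2 = true) (y : WIdx m) :
    H x y = (1 : Matrix (WIdx m) (WIdx m) R) x y := by
  have hrow : Hᵀ x.dual = (1 : Matrix (WIdx m) (WIdx m) R) x.dual := by
    ext z
    rw [transpose_apply,
      apply_eq_one_apply_of_right_eq_false_of_slice hH hslice hlm (by simp [hx]), one_apply,
      one_apply]
    exact if_congr eq_comm rfl rfl
  calc H x y = (symplForm R m * H) x.dual y := by rw [symplForm_mul_apply, x.dual_dual]
    _ = (Hᵀ * (symplForm R m * H)) x.dual y := by
      conv_lhs => rw [← Matrix.one_mul (symplForm R m * H)]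
      rw [mul_apply, mul_apply, hrow]
    _ = symplForm R m x.dual y := by rw [← Matrix.mul_assoc, hH.beta]
    _ = (1 : Matrix _ _ R) x y := by
      rw [← Matrix.mul_one (symplForm R m), symplForm_mul_apply, x.dual_dual]

theorem shift_mul_apply_of_slice [NoZeroDivisors R] (hlm : ∀ i, l i ≤ m i) {x : WIdx m}
    (hx : x.summand.2 = true) (y : WIdx m) : (shift R m * H) x y = shift R m x y := by
  have hrow : H x = (1 : Matrix (WIdx m) (WIdx m) R) x :=
    funext (apply_eq_one_apply_of_left_eq_true_of_slice hH hslice hlm hx)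
  rw [hH.commute_shift.eq, mul_apply, hrow, ← mul_apply, Matrix.one_mul]

theorem sum_pairing_of_slice [NoZeroDivisors R] (hlm : ∀ i, l i ≤ m i) (i : Fin s) {e : ℕ}
    (he : e < m i) :
    ∑ u : WIdx m with u.summand.2 = false, H u (.mk (i, true) e he) *
        (shift R m * H) u.dual (.mk (i, true) e he) =
      coeff H (i, false) (i, true) (m i - 2 - 2 * e) := by
  have hterm : ∀ u : WIdx m, u.summand.2 = false → H u (.mk (i, true) e he) *
      (shift R m * H) u.dual (.mk (i, true) e he) =
        if u.summand = (i, false) ∧ u.expo + e + 2 = m i then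
          coeff H (i, false) (i, true) (m i - 2 - 2 * e) else 0 := by
    intro u hu
    have hiff : (u.dual.summand = (i, true) ∧ u.dual.expo = e + 1) ↔
        u.summand = (i, false) ∧ u.expo + e + 2 = m i := by
      have := u.expo_lt
      simp only [WIdx.summand_dual, WIdx.expo_dual, Prod.ext_iff]
      grind
    rw [shift_mul_apply_of_slice hH hslice hlm (by simp [hu]), shift, of_apply, WIdx.summand_mk,
      WIdx.expo_mk]
    simp only [hiff, mul_ite, mul_one, mul_zero]
    refine ite_congr rfl (fun h => ?_) fun _ => rfl
    rw [apply_eq_entry H, h.1, WIdx.summand_mk, WIdx.expo_mk,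
      entry_eq_coeff hH.commute_shift _ _ (by dsimp only; omega)]
    congr 1
    omega
  rw [Finset.sum_congr rfl fun u hu => hterm u (Finset.mem_filter.mp hu).2]
  by_cases hlt : e + 1 < m i
  · rw [Finset.sum_eq_single (WIdx.mk (i, false) (m i - 2 - e) (by dsimp only; omega))]
    · rw [WIdx.summand_mk, WIdx.expo_mk, if_pos ⟨rfl, by omega⟩]
    · intro u _ hne
      refine if_neg fun h => hne (WIdx.ext ?_ ?_)
      · rw [WIdx.summand_mk, h.1]
      · rw [WIdx.expo_mk]; omega
    · simp
  · rw [coeff_eq_zero_of_neg _ _ _ (by omega)]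
    exact Finset.sum_eq_zero fun u _ => ite_self 0

theorem coeff_false_true_sq_of_slice [NoZeroDivisors R] (hlm : ∀ i, l i ≤ m i)
    (hml : ∀ i, m i ≤ 2 * l i + 1) (i : Fin s) (n : ℤ) :
    coeff H (i, false) (i, true) n ^ 2 = coeff H (i, false) (i, true) (2 * n + m i - 2 * l i) := by
  have hlmi := hlm i
  have hmli := hml i
  have hlarge : ∀ n : ℤ, l i ≤ n → coeff H (i, false) (i, true) n = 0 := fun n hn => by
    rw [coeff_eq_coeff_one_of_le_of_slice hslice i true hn, coeff_one, if_neg (by simp)]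
  rcases lt_or_ge n 0 with hn | hn
  · rw [coeff_eq_zero_of_neg _ _ _ hn, coeff_eq_zero_of_neg _ _ _ (by omega), sq, zero_mul]
  rcases le_or_gt (l i : ℤ) n with hln | hnl
  · rw [hlarge n hln, hlarge _ (by omega), sq, zero_mul]
  obtain ⟨c, rfl⟩ := Int.eq_ofNat_of_zero_le hn
  have hlt : l i - 1 - c < m (i, true).1 := by dsimp only; omega
  have h := coeff_sq_add_of_slice hH hslice hlm (WIdx.mk (i, true) (l i - 1 - c) hlt)
  rw [sum_pairing_of_slice hH hslice hlm i hlt, if_neg (by simp), CharTwo.add_eq_zero] at h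
  simp only [WIdx.summand_mk, WIdx.expo_mk] at h
  rw [show (l i - 1 - (l i - 1 - c : ℕ) : ℤ) = c by omega] at h
  rw [h]
  congr 1
  omega

theorem coeff_false_true_eq_zero_or_eq_one_of_slice [IsDomain R] (hlm : ∀ i, l i ≤ m i)
    (hml : ∀ i, m i ≤ 2 * l i + 1) (i : Fin s) (n : ℤ) :
    coeff H (i, false) (i, true) n = 0 ∨ coeff H (i, false) (i, true) n = 1 := by
  let f : ℤ → R := fun r => coeff H (i, false) (i, true) (r + 2 * l i - m i)
  have hf : ∀ r, f r ^ 2 = f (2 * r) := fun r => by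
    simp only [f]
    rw [coeff_false_true_sq_of_slice hH hslice hlm hml]
    ring_nf
  have hN : ∀ r : ℤ, (2 * m i + 1 : ℕ) ≤ |r| → f r = 0 := fun r hr => by
    have := hlm i
    rcases le_abs'.mp hr with h | h
    · exact coeff_eq_zero_of_neg _ _ _ (by omega)
    · exact (coeff_eq_coeff_one_of_le_of_slice hslice i true (by omega)).trans
        ((coeff_one _ _ _).trans (if_neg (by simp)))
  have h := eq_zero_or_eq_one_of_sq_eq_two_mul hf hN (n - 2 * l i + m i)
  simp only [f] at h
  rwa [show n - 2 * l i + m i + 2 * l i - m i = n by ring] at h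

theorem apply_eq_zero_or_eq_one_of_slice [IsDomain R] (hlm : ∀ i, l i ≤ m i)
    (hml : ∀ i, m i ≤ 2 * l i + 1) (x y : WIdx m) : H x y = 0 ∨ H x y = 1 := by
  have hone : (1 : Matrix (WIdx m) (WIdx m) R) x y = 0 ∨
      (1 : Matrix (WIdx m) (WIdx m) R) x y = 1 :=
    (ite_eq_or_eq _ _ _).symm
  by_cases hx : x.summand.2 = true
  · rwa [apply_eq_one_apply_of_left_eq_true_of_slice hH hslice hlm hx]
  by_cases hy : y.summand.2 = false
  · rwa [apply_eq_one_apply_of_right_eq_false_of_slice hH hslice hlm hy]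
  by_cases hi : x.summand.1 = y.summand.1
  · have hxs : x.summand = (x.summand.1, false) := Prod.ext rfl (Bool.eq_false_of_not_eq_true hx)
    have hys : y.summand = (x.summand.1, true) :=
      Prod.ext hi.symm (Bool.eq_true_of_not_eq_false hy)
    rw [apply_eq_entry H, entry_eq_coeff hH.commute_shift _ _ x.expo_lt, hxs, hys]
    exact coeff_false_true_eq_zero_or_eq_one_of_slice hH hslice hlm hml _ _
  · exact .inl (apply_eq_zero_of_fst_ne_of_slice hH hslice hi)

end

end Slice

section UpperBound

variable {m l : Fin s → ℕ}

variable (l) in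
/-- The polynomials in `G` whose vanishing says that `h * G` has the slice coordinates of `1`. -/
noncomputable def slicePolynomial (h : Matrix (WIdx m) (WIdx m) k) (e : SliceIdx m l) :
    MvPolynomial (WIdx m × WIdx m) k :=
  sliceCoord l (h.map MvPolynomial.C * genMat k m) e - sliceCoord l 1 e

theorem map_slicePolynomial {D : Type*} [CommRing D] [Algebra k D]
    (φ : MvPolynomial (WIdx m × WIdx m) k →ₐ[k] D) (h : Matrix (WIdx m) (WIdx m) k)
    (e : SliceIdx m l) : φ (slicePolynomial l h e) =
      sliceCoord l (h.map (algebraMap k D) *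
        (genMat k m).map (φ : MvPolynomial (WIdx m × WIdx m) k →+* D)) e - sliceCoord l 1 e := by
  have hC : (h.map MvPolynomial.C).map (φ : MvPolynomial (WIdx m × WIdx m) k →+* D) =
      h.map (algebraMap k D) := by
    ext; simp [MvPolynomial.algHom_C]
  rw [slicePolynomial, ← RingHom.coe_coe, map_sub, ← sliceCoord_map, ← sliceCoord_map,
    Matrix.map_mul, hC, Matrix.map_one _ (map_zero _) (map_one _)]

open MvPolynomial in
theorem ringKrullDim_centralizer_le [CharP k 2] [IsAlgClosed k] (hlm : ∀ i, l i ≤ m i)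
    (hml : ∀ i, m i ≤ 2 * l i + 1) :
    ringKrullDim (MvPolynomial (WIdx m × WIdx m) k ⧸ centralizerIdeal k m l) ≤
      Nat.card (SliceIdx m l) := by
  refine ringKrullDim_quotient_le_of_forall_zeroLocus (n := Nat.card (SliceIdx m l)) _
    fun x hx => ?_
  set g := (genMat k m).map ((aeval x : _ →ₐ[k] k) : MvPolynomial (WIdx m × WIdx m) k →+* k)
  have hg : IsCentralizer l g := (centralizerIdeal_le_ker_iff _).mp fun p hp => hx p hp
  refine ⟨Set.range (slicePolynomial l g⁻¹), ?_, encard_range_le_natCard _, ?_⟩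
  · rintro _ ⟨e, rfl⟩
    rw [map_slicePolynomial, Algebra.algebraMap_self, RingHom.coe_id, Matrix.map_id,
      nonsing_inv_mul _ ((isUnit_iff_isUnit_det _).mp hg.isUnit), sub_self]
  intro D _ _ _ φ hφ hS c
  have : CharP D 2 := charP_of_injective_algebraMap (algebraMap k D).injective 2
  set G := (genMat k m).map (φ : MvPolynomial (WIdx m × WIdx m) k →+* D)
  have hG : IsCentralizer l G := (centralizerIdeal_le_ker_iff _).mp hφ
  set H := g⁻¹.map (algebraMap k D) * G with hH_def
  have hH : IsCentralizer l H := (hg.inv.map _).mul hG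
  have hslice : ∀ e, sliceCoord l H e = sliceCoord l 1 e := fun e => by
    rw [← sub_eq_zero, ← map_slicePolynomial]
    exact hS _ ⟨e, rfl⟩
  have hGH : G = g.map (algebraMap k D) * H := by
    rw [hH_def, ← Matrix.mul_assoc, ← Matrix.map_mul, hg.mul_inv,
      Matrix.map_one _ (map_zero _) (map_one _), Matrix.one_mul]
  have hX : φ (X c) = G c.1 c.2 := rfl
  rw [hX, hGH, mul_apply]
  refine Subalgebra.sum_mem _ fun z _ => mul_mem (Subalgebra.algebraMap_mem _ _) ?_
  rcases apply_eq_zero_or_eq_one_of_slice hH hslice hlm hml z c.2 with h | h <;> rw [h]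
  exacts [zero_mem _, one_mem _]

end UpperBound

variable {m l : Fin s → ℕ}

theorem card_toLex_lt (p : Fin s × Bool) :
    Nat.card {q : Fin s × Bool // toLex q < toLex p} = 2 * p.1 + p.2.toNat := by
  have h : ({q | toLex q < toLex p} : Finset (Fin s × Bool)) =
      Finset.Iio p.1 ×ˢ Finset.univ ∪ {p.1} ×ˢ ({c | c < p.2} : Finset Bool) := by
    ext q
    simp only [Prod.Lex.toLex_lt_toLex, Finset.mem_filter_univ, Finset.mem_union,
      Finset.mem_product, Finset.mem_Iio, Finset.mem_univ, Finset.mem_singleton, and_true]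
  rw [Nat.card_eq_fintype_card, Fintype.card_subtype, h, Finset.card_union_of_disjoint]
  · rcases p with ⟨i, _ | _⟩
    · simp [mul_comm]
    · simp [mul_comm, Finset.filter_insert, Finset.filter_singleton]
  · exact Finset.disjoint_product.mpr (.inl (by simp))

theorem card_sliceIdx (hlm : ∀ i, l i ≤ m i) :
    Nat.card (SliceIdx m l) = ∑ i : Fin s, ((4 * (i : ℕ) + 3) * m i - 2 * l i) := by
  simp only [SliceIdx, Nat.card_sum, Nat.card_sigma, Nat.card_prod, card_toLex_lt, Nat.card_fin,
    Fintype.sum_prod_type, Fintype.sum_bool, Bool.toNat_true, Bool.toNat_false]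
  rw [← Finset.sum_add_distrib]
  refine Finset.sum_congr rfl fun i _ => ?_
  obtain ⟨d, hd⟩ := Nat.exists_eq_add_of_le (hlm i)
  rw [hd, Nat.add_sub_cancel_left]
  refine (Nat.sub_eq_of_eq_add ?_).symm
  ring

theorem card_sliceIdx_add_card_equationIdx (hm0 : ∀ i, 0 < m i) (hmono : Antitone m)
    (hlm : ∀ i, l i ≤ m i) :
    Nat.card (SliceIdx m l) + Nat.card (EquationIdx m l) = Nat.card (WIdx m × WIdx m) := by
  have hmin : ∑ p : Fin s × Bool, ∑ q : Fin s × Bool, min (m p.1) (m q.1) =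
      2 * ∑ p : Fin s × Bool, m p.1 * Nat.card {q : Fin s × Bool // toLex q < toLex p} +
        ∑ p : Fin s × Bool, m p.1 :=
    sum_sum_min_of_injective toLex.injective fun p q h =>
      hmono (Prod.Lex.monotone_fst _ _ h.le)
  have hm : ∑ p : Fin s × Bool, m p.1 =
      ∑ p : Fin s × Bool, (m p.1 - l p.1) + ∑ p : Fin s × Bool, l p.1 := by
    rw [← Finset.sum_add_distrib]
    exact Finset.sum_congr rfl fun p _ => (Nat.sub_add_cancel (hlm p.1)).symm
  have hW : Nat.card (WIdx m × WIdx m) =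
      ∑ p : Fin s × Bool, ∑ q : Fin s × Bool, m p.1 * (m q.1 - 1) +
        ∑ p : Fin s × Bool, ∑ q : Fin s × Bool, (m p.1 - m q.1) +
          ∑ p : Fin s × Bool, ∑ q : Fin s × Bool, min (m p.1) (m q.1) := by
    rw [Nat.card_prod, Nat.card_congr WIdx.equivSigma, Nat.card_sigma, Finset.sum_mul_sum]
    simp only [Nat.card_fin, ← Finset.sum_add_distrib, mul_pred_add_tsub_add_min _ (hm0 _)]
  rw [hW, hmin, hm]
  simp only [SliceIdx, EquationIdx, Nat.card_sum, Nat.card_sigma, Nat.card_prod, Nat.card_fin,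
    Finset.sum_mul_sum, Fintype.sum_prod_type (fun p : (Fin s × Bool) × (Fin s × Bool) =>
      m p.1.1 - m p.2.1)]
  ring

end FormModule

/-- for the form module `V = W_{χ(m₁)}(m₁) ⊕ ⋯ ⊕ W_{χ(m_s)}(m_s)`
(`m₁ ≥ … ≥ m_s`) over an algebraically closed field of characteristic 2, the centralizer
`Z(V)` of the corresponding nilpotent `ξ ∈ sp(2n)*` in `Sp(2n)` has dimension (as an
affine variety, i.e. the Krull dimension of its coordinate ring)
`Σᵢ ((4i−1)mᵢ − 2χ(mᵢ))`. -/
theorem dim_symplectic_dual_centralizer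
    [CharP k 2] [IsAlgClosed k] (m l : Fin s → ℕ)
    (hm0 : ∀ i, 0 < m i) (hmono : Antitone m) (hlmono : Antitone l)
    (hmlmono : Antitone fun i => m i - l i)
    (hbound : ∀ i, m i / 2 ≤ l i ∧ l i ≤ m i)
    (hfun : ∀ i j, m i = m j → l i = l j) :
    ringKrullDim (MvPolynomial (WIdx m × WIdx m) k ⧸ centralizerIdeal k m l)
      = ((∑ i : Fin s, ((4 * (i : ℕ) + 3) * m i - 2 * l i) : ℕ) : WithBot (WithTop ℕ)) := by
  have hl (i j : Fin s) : l j ≤ l i + (m j - m i) := by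
    obtain hij | hji := le_total i j
    · exact (hlmono hij).trans le_self_add
    · have hd := hmlmono hji
      have hi := (hbound i).2
      have hj := (hbound j).2
      have hm := hmono hji
      dsimp only at hd
      omega
  have hml (i : Fin s) : m i ≤ 2 * l i + 1 := by
    have := (hbound i).1
    omega
  have hlm (i : Fin s) : l i ≤ m i := (hbound i).2
  have hupper := FormModule.ringKrullDim_centralizer_le (k := k) hlm hml
  have hlower := FormModule.card_le_ringKrullDim_centralizer_add (k := k) hl hml
  rw [← FormModule.card_sliceIdx_add_card_equationIdx hm0 hmono hlm] at hlower
  rw [← FormModule.card_sliceIdx hlm]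
  exact eq_natCast_of_le_of_add_le_add hupper hlower
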